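/- Let B be a real Banach space, E ⊆ B a σ-compact set, f : B → ℝ a bounded Lipschitz function, and ε > 0. Then there exists a sequence (f_n) of smooth cylindrical functions f_n : B → ℝ such that: (i) inf_B f ≤ f_n(x) ≤ sup_B f for all x ∈ B and Lip(f_n) ≤ Lip(f) + ε for every n; (ii) f_n(x) → f(x) as n → ∞ for every x ∈ E; (iii) limsup_n ‖d_x f_n‖_{B*} ≤ lip_a(f)(x) for every x ∈ E, where d_x f_n ∈ B* denotes the Fréchet differential of f_n at x. -/

import Mathlib

open Metric Set Filter ENNReal MeasureTheory

/-- `lipOn f E` is the Lipschitz constant (valued in `ℝ≥0∞`) of `f : X → ℝ` restricted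
to the set `E ⊆ X`, namely `Lip(f; E)`. -/
noncomputable def lipOn {X : Type*} [MetricSpace X] (f : X → ℝ) (E : Set X) : ℝ≥0∞ :=
  ⨆ (x : E) (y : E), edist (f x) (f y) / edist (x : X) (y : X)

/-- `asympSlope f x` is the asymptotic slope `lip_a(f)(x) = inf_{r>0} Lip(f; B_r(x))`. -/
noncomputable def asympSlope {X : Type*} [MetricSpace X] (f : X → ℝ) (x : X) : ℝ≥0∞ :=
  ⨅ (r : ℝ) (_ : 0 < r), lipOn f (Metric.ball x r)

/-- A smooth cylindrical function on a Banach space `B`: a function of the form `g ∘ p`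
where `p : B → V` is a bounded linear operator into a finite-dimensional normed space `V`
and `g : V → ℝ` is infinitely differentiable, bounded and Lipschitz. -/
def IsCylindrical {B : Type*} [NormedAddCommGroup B] [NormedSpace ℝ B] (f : B → ℝ) : Prop :=
  ∃ (V : Type) (_ : NormedAddCommGroup V) (_ : NormedSpace ℝ V),
    FiniteDimensional ℝ V ∧ ∃ (p : B →L[ℝ] V) (g : V → ℝ),
      ContDiff ℝ (⊤ : ℕ∞) g ∧ (∃ C, ∀ v, |g v| ≤ C) ∧ (∃ K, LipschitzWith K g) ∧ f = g ∘ p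

/-!
On a compact set `K` the norm of differences is computed, up to a small error `δ`, by finitely many
norming functionals; these form a 1-Lipschitz projection `p` to a finite-dimensional space that is
almost isometric on `K`. To transfer `f|_K` to that space without losing its local slopes, take a
McShane envelope in which the cone with apex `(p y, f y)` has slope `Lip(f; B̄_ρ(y)) + ε` up to
distance `ρ` and `Lip(f) + ε` beyond. The extra `ε` in the slopes makes every cone with far apex
exceed the envelope by a definite amount, so near `p x` only cones with apex close to `p x` matter,
and the Lipschitz constant of the envelope there is at most `Lip(f; B̄_{2ρ}(x)) + ε`. Clamping the
envelope to `[inf f, sup f]` and mollifying it at a scale below `δ` preserves these bounds, and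
letting `ε, ρ → 0` along a compact exhaustion of `E` gives the sequence.
-/

open scoped NNReal Convolution Topology Pointwise

section LipschitzConstant

variable {X : Type*} [MetricSpace X] {f : X → ℝ} {s : Set X} {C : ℝ≥0}

lemma lipOn_le_coe_iff : lipOn f s ≤ C ↔ LipschitzOnWith C f s := by
  refine ⟨fun h x hx y hy => ?_, fun h => iSup₂_le fun x y =>
    ENNReal.div_le_of_le_mul (h x.2 y.2)⟩
  rcases eq_or_ne x y with rfl | hxy
  · simp
  · have hquot : edist (f x) (f y) / edist x y ≤ C :=
      (le_iSup₂_of_le (⟨x, hx⟩ : s) (⟨y, hy⟩ : s) le_rfl).trans h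
    exact (ENNReal.div_le_iff (edist_pos.2 hxy).ne' (edist_ne_top _ _)).1 hquot

lemma lipOn_ne_top (hf : LipschitzOnWith C f s) : lipOn f s ≠ ⊤ :=
  ne_top_of_le_ne_top ENNReal.coe_ne_top (lipOn_le_coe_iff.2 hf)

lemma lipschitzOnWith_toNNReal_lipOn (hs : lipOn f s ≠ ⊤) :
    LipschitzOnWith (lipOn f s).toNNReal f s :=
  lipOn_le_coe_iff.1 (ENNReal.coe_toNNReal hs).ge

lemma toNNReal_lipOn_le (hf : LipschitzOnWith C f s) : (lipOn f s).toNNReal ≤ C :=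
  ENNReal.toNNReal_mono ENNReal.coe_ne_top (lipOn_le_coe_iff.2 hf)

lemma limsup_ofReal_le_asympSlope {ι : Type*} {l : Filter ι} [l.NeBot] {x : X} {b e r : ι → ℝ}
    (hr : Tendsto r l (𝓝 0)) (he : Tendsto e l (𝓝 0))
    (hb : ∀ᶠ i in l, ∀ C : ℝ≥0, LipschitzOnWith C f (closedBall x (r i)) → b i ≤ C + e i) :
    limsup (fun i => ENNReal.ofReal (b i)) l ≤ asympSlope f x := by
  refine le_iInf₂ fun δ hδ => ?_
  by_cases htop : lipOn f (ball x δ) = ⊤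
  · exact htop ▸ le_top
  set C := (lipOn f (ball x δ)).toNNReal with hC
  have hlim : Tendsto (fun i => ENNReal.ofReal (C + e i)) l (𝓝 (lipOn f (ball x δ))) := by
    rw [← ENNReal.coe_toNNReal htop, ← hC]
    simpa using ENNReal.tendsto_ofReal (he.const_add (C : ℝ))
  rw [← hlim.limsup_eq]
  refine limsup_le_limsup ?_
  filter_upwards [hb, hr.eventually_lt_const hδ] with i hbi hri
  exact ENNReal.ofReal_le_ofReal (hbi C
    ((lipschitzOnWith_toNNReal_lipOn htop).mono (closedBall_subset_ball hri)))

end LipschitzConstant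

lemma lipschitzOnWith_iInf {ι X : Type*} [PseudoMetricSpace X] {h : ι → X → ℝ} {s : Set X}
    {C : ℝ≥0} {η : ℝ} (hη : 0 < η) (hbdd : ∀ x ∈ s, BddBelow (range fun i => h i x))
    (hC : ∀ i, ∀ x ∈ s, h i x < (⨅ j, h j x) + η → LipschitzOnWith C (h i) s) :
    LipschitzOnWith C (fun x => ⨅ i, h i x) s := by
  cases isEmpty_or_nonempty ι
  · simpa only [Real.iInf_of_isEmpty] using (LipschitzWith.const' 0).lipschitzOnWith
  refine LipschitzOnWith.of_le_add_mul C fun x hx y hy => le_of_forall_pos_le_add fun η' hη' => ?_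
  obtain ⟨i, hi⟩ := exists_lt_of_ciInf_lt
    (lt_add_of_pos_right (⨅ j, h j y) (lt_min hη hη'))
  have hLip := hC i y hy (hi.trans_le (by gcongr; exact min_le_left _ _))
  calc ⨅ j, h j x ≤ h i x := ciInf_le (hbdd x hx) i
    _ ≤ h i y + C * dist x y := hLip.le_add_mul hx hy
    _ ≤ (⨅ j, h j y) + C * dist x y + η' := by linarith [min_le_right η η']

section TwoSlope

/-- The continuous function on `ℝ` that is linear of slope `a` on `(-∞, ρ]`, of slope `L` on
`[ρ, ∞)`, and vanishes at `0`; the formula as a maximum is meant for `a ≤ L` and `0 ≤ ρ`. It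
controls the growth of an `L`-Lipschitz function that is `a`-Lipschitz near a point. -/
def twoSlope (a L : ℝ≥0) (ρ t : ℝ) : ℝ :=
  max (a * t) (L * t - (L - a) * ρ)

variable {a L : ℝ≥0} {ρ t : ℝ}

lemma twoSlope_of_le (haL : a ≤ L) (ht : t ≤ ρ) : twoSlope a L ρ t = a * t := by
  have := mul_le_mul_of_nonneg_left ht (sub_nonneg.2 (NNReal.coe_le_coe.2 haL))
  exact max_eq_left (by linarith)

lemma twoSlope_nonneg (ht : 0 ≤ t) : 0 ≤ twoSlope a L ρ t :=
  le_max_of_le_left (by positivity)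

lemma twoSlope_add_add (c : ℝ≥0) :
    twoSlope (a + c) (L + c) ρ t = twoSlope a L ρ t + c * t := by
  rw [twoSlope, twoSlope, ← max_add_add_right]
  push_cast
  ring_nf

lemma monotone_twoSlope : Monotone (twoSlope a L ρ) := fun s t hst => by
  unfold twoSlope
  gcongr

lemma lipschitzWith_twoSlope (haL : a ≤ L) : LipschitzWith L (twoSlope a L ρ) := by
  have hlin (c : ℝ≥0) (d : ℝ) : LipschitzWith c fun t : ℝ => c * t - d :=
    LipschitzWith.of_dist_le_mul fun s t => by
      rw [dist_sub_right, Real.dist_eq, Real.dist_eq, ← mul_sub, abs_mul, NNReal.abs_eq]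
  simpa only [max_eq_right haL, sub_zero, twoSlope] using! (hlin a 0).max (hlin L ((L - a) * ρ))

/-- Beyond distance `ρ`, cut the segment from `y` to `x` at distance `ρ` from `y`. -/
lemma le_add_twoSlope_dist {E : Type*} [NormedAddCommGroup E] [NormedSpace ℝ E] {f : E → ℝ}
    {x y : E} (hρ : 0 ≤ ρ) (hL : LipschitzWith L f) (ha : LipschitzOnWith a f (closedBall y ρ)) :
    f x ≤ f y + twoSlope a L ρ (dist x y) := by
  rcases le_or_gt (dist x y) ρ with hle | hgt
  · exact (ha.le_add_mul hle (mem_closedBall_self hρ)).trans (by gcongr; exact le_max_left _ _)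
  · have hpos : 0 < dist x y := hρ.trans_lt hgt
    set z := AffineMap.lineMap y x (ρ / dist x y) with hz
    have hzy : dist z y = ρ := by
      rw [hz, dist_lineMap_left, Real.norm_of_nonneg (by positivity), dist_comm y x,
        div_mul_cancel₀ _ hpos.ne']
    have hxz : dist x z = dist x y - ρ := by
      rw [hz, dist_right_lineMap, Real.norm_of_nonneg (sub_nonneg.2 ((div_le_one hpos).2 hgt.le)),
        dist_comm y x, sub_mul, one_mul, div_mul_cancel₀ _ hpos.ne']
    calc f x ≤ f z + L * dist x z := hL.le_add_mul x z
      _ ≤ f y + a * dist z y + L * dist x z := by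
        gcongr
        exact ha.le_add_mul hzy.le (mem_closedBall_self hρ)
      _ = f y + (L * dist x y - (L - a) * ρ) := by rw [hzy, hxz]; ring
      _ ≤ f y + twoSlope a L ρ (dist x y) := by gcongr; exact le_max_right _ _

end TwoSlope

section FiniteDimensionalReduction

variable {𝕜 E : Type*} [RCLike 𝕜] [NormedAddCommGroup E] [NormedSpace 𝕜 E] {K : Set E} {δ : ℝ}

lemma exists_norm_le_norm_add_of_totallyBounded (hK : TotallyBounded K) (hδ : 0 < δ) :
    ∃ (k : ℕ) (p : E →L[𝕜] (Fin k → 𝕜)), (∀ x, ‖p x‖ ≤ ‖x‖) ∧ ∀ x ∈ K, ‖x‖ ≤ ‖p x‖ + δ := by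
  obtain ⟨S, hS, hcover⟩ := Metric.totallyBounded_iff.1 hK (δ / 2) (half_pos hδ)
  obtain ⟨k, w, -, rfl⟩ := hS.fin_param
  choose q hq hqw using fun i => exists_dual_vector'' 𝕜 (w i)
  have hp (x : E) : ‖ContinuousLinearMap.pi q x‖ ≤ ‖x‖ :=
    (pi_norm_le_iff_of_nonneg (norm_nonneg x)).2 fun i => by
      simpa using (q i).le_of_opNorm_le (hq i) x
  refine ⟨k, ContinuousLinearMap.pi q, hp, fun x hx => ?_⟩
  obtain ⟨i, hi⟩ : ∃ i, dist x (w i) < δ / 2 := by simpa using hcover hx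
  rw [dist_eq_norm] at hi
  have hw : ‖w i‖ ≤ ‖ContinuousLinearMap.pi q (w i)‖ := by
    simpa [hqw] using norm_le_pi_norm (ContinuousLinearMap.pi q (w i)) i
  calc ‖x‖ ≤ ‖x - w i‖ + ‖w i‖ := norm_le_norm_sub_add x (w i)
    _ ≤ ‖x - w i‖ + (‖ContinuousLinearMap.pi q x‖ + ‖ContinuousLinearMap.pi q (x - w i)‖) := by
      gcongr
      rw [map_sub]
      exact hw.trans (norm_le_norm_add_norm_sub _ _)
    _ ≤ ‖ContinuousLinearMap.pi q x‖ + δ := by linarith [hp (x - w i)]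

end FiniteDimensionalReduction

section Mollification

variable {V F : Type*} [NormedAddCommGroup V] [NormedSpace ℝ V] [FiniteDimensional ℝ V]
  [NormedAddCommGroup F] [NormedSpace ℝ F]
  [MeasurableSpace V] [BorelSpace V] {μ : Measure V} [μ.IsAddHaarMeasure]
  {φ : ContDiffBump (0 : V)}

lemma convolutionExists_normed {g : V → F} (hg : Continuous g) :
    ConvolutionExists (φ.normed μ) g (ContinuousLinearMap.lsmul ℝ ℝ) μ :=
  φ.hasCompactSupport_normed.convolutionExists_left _ φ.continuous_normed hg.locallyIntegrable

lemma lipschitzOnWith_normed_convolution {g : V → F} {C : ℝ≥0} {s : Set V}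
    (hg : Continuous g) (hC : LipschitzOnWith C g (thickening φ.rOut s)) :
    LipschitzOnWith C (φ.normed μ ⋆[ContinuousLinearMap.lsmul ℝ ℝ, μ] g) s := by
  have hmem {x t : V} (hx : x ∈ s) (ht : φ.normed μ t ≠ 0) : x - t ∈ thickening φ.rOut s := by
    have ht' : t ∈ ball 0 φ.rOut := φ.support_normed_eq (μ := μ) ▸ ht
    exact mem_thickening_iff.2 ⟨x, hx, by simpa using ht'⟩
  refine LipschitzOnWith.of_dist_le_mul fun x hx y hy => ?_
  rw [dist_eq_norm, convolution, convolution, ← integral_sub (convolutionExists_normed hg x)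
    (convolutionExists_normed hg y)]
  calc _ ≤ ∫ t, φ.normed μ t * (C * dist x y) ∂μ := by
        refine norm_integral_le_of_norm_le (φ.integrable_normed.mul_const _)
          (ae_of_all _ fun t => ?_)
        rw [ContinuousLinearMap.lsmul_apply, ContinuousLinearMap.lsmul_apply, ← smul_sub, norm_smul,
          Real.norm_of_nonneg (φ.nonneg_normed t)]
        by_cases ht : φ.normed μ t = 0
        · simp [ht]
        · gcongr
          · exact φ.nonneg_normed t
          · simpa [dist_eq_norm] using hC.dist_le_mul _ (hmem hx ht) _ (hmem hy ht)
    _ = C * dist x y := by rw [integral_mul_const, φ.integral_normed, one_mul]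

lemma normed_convolution_mem_Icc {g : V → ℝ} {m M : ℝ} (hg : Continuous g)
    (hmM : ∀ v, g v ∈ Icc m M) (v : V) :
    (φ.normed μ ⋆[ContinuousLinearMap.lsmul ℝ ℝ, μ] g) v ∈ Icc m M := by
  have hconst (c : ℝ) : (φ.normed μ ⋆[ContinuousLinearMap.lsmul ℝ ℝ, μ] fun _ => c) v = c :=
    φ.normed_convolution_eq_right fun _ _ => rfl
  constructor
  · rw [← hconst m]
    exact convolution_mono_right (convolutionExists_normed continuous_const v)
      (convolutionExists_normed hg v) φ.nonneg_normed fun v => (hmM v).1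
  · rw [← hconst M]
    exact convolution_mono_right (convolutionExists_normed hg v)
      (convolutionExists_normed continuous_const v) φ.nonneg_normed fun v => (hmM v).2

end Mollification

lemma exists_contDiff_approx {V : Type*} [NormedAddCommGroup V] [NormedSpace ℝ V]
    [FiniteDimensional ℝ V] {g : V → ℝ} {K : ℝ≥0} {m M τ : ℝ} (hg : LipschitzWith K g)
    (hmM : ∀ v, g v ∈ Icc m M) (hτ : 0 < τ) :
    ∃ G : V → ℝ, ContDiff ℝ (⊤ : ℕ∞) G ∧ (∀ v, G v ∈ Icc m M) ∧
      (∀ v, dist (G v) (g v) ≤ K * τ) ∧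
      ∀ (C : ℝ≥0) (s : Set V), LipschitzOnWith C g (thickening τ s) → LipschitzOnWith C G s := by
  borelize V
  let φ : ContDiffBump (0 : V) := ⟨τ / 2, τ, half_pos hτ, half_lt_self hτ⟩
  let μ : Measure V := Measure.addHaar
  have hcont := hg.continuous
  refine ⟨φ.normed μ ⋆[ContinuousLinearMap.lsmul ℝ ℝ, μ] g, ?_,
    normed_convolution_mem_Icc hcont hmM, fun v => ?_,
    fun C s => lipschitzOnWith_normed_convolution (φ := φ) hcont⟩
  · exact φ.hasCompactSupport_normed.contDiff_convolution_left _ φ.contDiff_normed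
      hcont.locallyIntegrable
  · exact φ.dist_normed_convolution_le hcont.aestronglyMeasurable fun w hw =>
      hg.dist_le_mul_of_le (mem_ball.1 hw).le

section ConeEnvelope

variable {E V : Type*} [MetricSpace E] [PseudoMetricSpace V]
  {f : E → ℝ} {p : E → V} {K : Set E} {L ε : ℝ≥0} {ρ : ℝ} {x y : E} {u : V}

/-- The Lipschitz constant of `f` on the closed ball `B̄_ρ(y)`, as a nonnegative real; it is `0`
when that constant is infinite. -/
noncomputable def ballLip (f : E → ℝ) (ρ : ℝ) (y : E) : ℝ≥0 :=
  (lipOn f (closedBall y ρ)).toNNReal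

/-- The cone with apex `(p y, f y)` over the image space of `p`, whose slope is
`Lip(f; B̄_ρ(y)) + ε` up to distance `ρ` from `p y` and `L + ε` beyond. -/
noncomputable def cone (f : E → ℝ) (p : E → V) (L ε : ℝ≥0) (ρ : ℝ) (y : E) (u : V) : ℝ :=
  f y + twoSlope (ballLip f ρ y + ε) (L + ε) ρ (dist u (p y))

/-- The lower envelope of the cones with apex over `K`: a McShane-type extension of `f|_K` to the
image space of `p` that also keeps track of the local Lipschitz constants of `f`. -/
noncomputable def coneEnvelope (f : E → ℝ) (p : E → V) (K : Set E) (L ε : ℝ≥0) (ρ : ℝ) (u : V) :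
    ℝ :=
  ⨅ y : K, cone f p L ε ρ y u

lemma ballLip_le (hf : LipschitzOnWith L f (closedBall y ρ)) : ballLip f ρ y ≤ L :=
  toNNReal_lipOn_le hf

lemma lipschitzOnWith_ballLip (hf : LipschitzWith L f) :
    LipschitzOnWith (ballLip f ρ y) f (closedBall y ρ) :=
  lipschitzOnWith_toNNReal_lipOn (lipOn_ne_top hf.lipschitzOnWith)

lemma ballLip_add_le (hf : LipschitzWith L f) : ballLip f ρ y + ε ≤ L + ε := by
  gcongr
  exact ballLip_le hf.lipschitzOnWith

lemma le_cone : f y ≤ cone f p L ε ρ y u :=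
  le_add_of_nonneg_right (twoSlope_nonneg dist_nonneg)

lemma cone_apex (hf : LipschitzWith L f) (hρ : 0 ≤ ρ) : cone f p L ε ρ y (p y) = f y := by
  rw [cone, dist_self, twoSlope_of_le (ballLip_add_le hf) hρ, mul_zero, add_zero]

lemma lipschitzWith_cone (hf : LipschitzWith L f) : LipschitzWith (L + ε) (cone f p L ε ρ y) := by
  simpa only [mul_one, one_mul] using! (isometry_add_left (f y)).lipschitz.comp
    ((lipschitzWith_twoSlope (ballLip_add_le hf)).comp (LipschitzWith.dist_left (p y)))

lemma lipschitzOnWith_cone (hf : LipschitzWith L f) :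
    LipschitzOnWith (ballLip f ρ y + ε) (cone f p L ε ρ y) (closedBall (p y) ρ) := by
  refine LipschitzOnWith.of_le_add_mul _ fun u hu v hv => ?_
  rw [cone, cone, twoSlope_of_le (ballLip_add_le hf) hu, twoSlope_of_le (ballLip_add_le hf) hv,
    add_assoc, ← mul_add, add_comm (dist v _)]
  gcongr
  exact dist_triangle u v (p y)

lemma bddBelow_range_cone (hK : BddBelow (f '' K)) (u : V) :
    BddBelow (range fun y : K => cone f p L ε ρ y u) := by
  obtain ⟨b, hb⟩ := hK
  exact ⟨b, by rintro _ ⟨y, rfl⟩; exact (hb ⟨y, y.2, rfl⟩).trans le_cone⟩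

lemma lipschitzWith_coneEnvelope (hf : LipschitzWith L f) (hK : BddBelow (f '' K)) :
    LipschitzWith (L + ε) (coneEnvelope f p K L ε ρ) :=
  lipschitzOnWith_univ.1 <| lipschitzOnWith_iInf one_pos (fun u _ => bddBelow_range_cone hK u)
    fun _ _ _ _ => (lipschitzWith_cone hf).lipschitzOnWith

lemma coneEnvelope_apply_le (hf : LipschitzWith L f) (hρ : 0 ≤ ρ) (hK : BddBelow (f '' K))
    (hx : x ∈ K) : coneEnvelope f p K L ε ρ (p x) ≤ f x :=
  (ciInf_le (bddBelow_range_cone hK (p x)) ⟨x, hx⟩).trans_eq (cone_apex hf hρ)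

end ConeEnvelope

section ConeEnvelopeNormed

variable {E V : Type*} [NormedAddCommGroup E] [NormedSpace ℝ E] [PseudoMetricSpace V]
  {f : E → ℝ} {p : E → V} {K : Set E} {L ε : ℝ≥0} {ρ δ : ℝ} {x y : E} {u : V}

lemma add_mul_dist_le_cone (hf : LipschitzWith L f) (hρ : 0 ≤ ρ) (hδ : 0 ≤ δ)
    (hxy : dist x y ≤ dist (p x) (p y) + δ) :
    f x + ε * dist (p x) (p y) ≤ cone f p L ε ρ y (p x) + L * δ := by
  set t := dist (p x) (p y)
  calc f x + ε * t ≤ f y + twoSlope (ballLip f ρ y) L ρ (dist x y) + ε * t := by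
        gcongr
        exact le_add_twoSlope_dist hρ hf (lipschitzOnWith_ballLip hf)
    _ ≤ f y + twoSlope (ballLip f ρ y) L ρ (t + δ) + ε * t := by
        gcongr
        exact monotone_twoSlope hxy
    _ ≤ f y + (twoSlope (ballLip f ρ y) L ρ t + L * δ) + ε * t := by
        gcongr
        simpa [abs_of_nonneg hδ] using
          (lipschitzWith_twoSlope (ballLip_le hf.lipschitzOnWith)).le_add_mul (t + δ) t
    _ = cone f p L ε ρ y (p x) + L * δ := by rw [cone, twoSlope_add_add]; ring

lemma le_coneEnvelope_apply_add (hf : LipschitzWith L f) (hρ : 0 ≤ ρ) (hδ : 0 ≤ δ) (hx : x ∈ K)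
    (hp : ∀ y ∈ K, dist x y ≤ dist (p x) (p y) + δ) :
    f x ≤ coneEnvelope f p K L ε ρ (p x) + L * δ := by
  have : Nonempty K := ⟨⟨x, hx⟩⟩
  rw [← sub_le_iff_le_add]
  refine le_ciInf fun y => ?_
  have hcone := add_mul_dist_le_cone (ε := ε) hf hρ hδ (hp y y.2)
  have : 0 ≤ ε * dist (p x) (p y) := by positivity
  linarith

lemma mul_dist_lt_of_cone_lt (hf : LipschitzWith L f) (hρ : 0 ≤ ρ) (hK : BddBelow (f '' K))
    (hx : x ∈ K) (hxy : dist x y ≤ dist (p x) (p y) + δ) (hu : dist u (p x) ≤ δ)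
    (hmin : cone f p L ε ρ y u < coneEnvelope f p K L ε ρ u + (L + ε) * δ) :
    ε * dist (p x) (p y) < 4 * ((L + ε) * δ) := by
  have hδ : 0 ≤ δ := dist_nonneg.trans hu
  have hslope : (L + ε) * dist u (p x) ≤ (L + ε) * δ := by gcongr
  have hcone := (lipschitzWith_cone (p := p) (ε := ε) (ρ := ρ) (y := y) hf).le_add_mul (p x) u
  have henv := (lipschitzWith_coneEnvelope (p := p) (ε := ε) (ρ := ρ) hf hK).le_add_mul u (p x)
  have hlower := add_mul_dist_le_cone (ε := ε) hf hρ hδ hxy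
  have hupper := coneEnvelope_apply_le (p := p) (ε := ε) hf hρ hK hx
  have hεδ : 0 ≤ ε * δ := by positivity
  rw [dist_comm] at hcone
  push_cast at hcone henv
  linarith

lemma lipschitzOnWith_coneEnvelope (hf : LipschitzWith L f) (hε : 0 < ε) (hρ : 0 ≤ ρ)
    (hK : BddBelow (f '' K)) (hx : x ∈ K) (hp : ∀ y ∈ K, dist x y ≤ dist (p x) (p y) + δ)
    (hδ : 0 < δ) (hδρ : 8 * ((L + ε) * δ) ≤ ε * ρ) {C : ℝ≥0}
    (hC : LipschitzOnWith C f (closedBall x (2 * ρ))) :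
    LipschitzOnWith (C + ε) (coneEnvelope f p K L ε ρ) (ball (p x) δ) := by
  have hε' : (0 : ℝ) < ε := hε
  have hδ_le : 8 * δ ≤ ρ := by
    refine le_of_mul_le_mul_left ?_ hε'
    have : 0 ≤ L * δ := by positivity
    linarith
  refine lipschitzOnWith_iInf (η := (L + ε) * δ) (by positivity)
    (fun u _ => bddBelow_range_cone hK u) fun y u hu hmin => ?_
  have hnear : dist (p x) (p y) ≤ ρ / 2 := by
    refine le_of_mul_le_mul_left ?_ hε'
    linarith [mul_dist_lt_of_cone_lt hf hρ hK hx (hp y y.2) (mem_ball.1 hu).le hmin]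
  have hslope : ballLip f ρ y ≤ C := ballLip_le <| hC.mono <| closedBall_subset_closedBall' <| by
    linarith [hp y y.2, dist_comm x y]
  have hball : ball (p x) δ ⊆ closedBall (p y) ρ :=
    ball_subset_closedBall.trans (closedBall_subset_closedBall' (by linarith))
  exact ((lipschitzOnWith_cone hf).mono hball).weaken (by gcongr)

end ConeEnvelopeNormed

lemma eventually_mem_accumulate {α : Type*} {s : ℕ → Set α} {x : α} (hx : x ∈ ⋃ n, s n) :
    ∀ᶠ n in atTop, x ∈ accumulate s n := by
  obtain ⟨N, hN⟩ := mem_iUnion.1 hx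
  filter_upwards [eventually_ge_atTop N] with n hn using mem_accumulate.2 ⟨N, hn, hN⟩

section CylindricalApproximation

variable {B : Type*} [NormedAddCommGroup B] [NormedSpace ℝ B] {f : B → ℝ} {K : Set B}
  {L ε : ℝ≥0} {ρ : ℝ}

lemma exists_lipschitz_factor_approx (hf : LipschitzWith L f) (hK : IsCompact K) (hε : 0 < ε)
    (hρ : 0 < ρ) :
    ∃ (k : ℕ) (p : B →L[ℝ] (Fin k → ℝ)) (g : (Fin k → ℝ) → ℝ) (δ : ℝ), 0 < δ ∧
      LipschitzWith 1 p ∧ LipschitzWith (L + ε) g ∧ (∀ x ∈ K, dist (g (p x)) (f x) ≤ ε * ρ) ∧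
      ∀ x ∈ K, ∀ C : ℝ≥0, LipschitzOnWith C f (closedBall x (2 * ρ)) →
        LipschitzOnWith (C + ε) g (ball (p x) δ) := by
  have hbdd := hK.bddBelow_image hf.continuous.continuousOn
  set δ : ℝ := ε * ρ / (8 * (L + ε)) with hδ_def
  have hδ : 0 < δ := by positivity
  have hδρ : 8 * ((L + ε) * δ) = ε * ρ := by rw [hδ_def]; field_simp
  have hKK : IsCompact (K - K) := by simpa only [sub_eq_add_neg] using hK.add hK.neg
  obtain ⟨k, p, hp, hpK⟩ :=
    exists_norm_le_norm_add_of_totallyBounded (𝕜 := ℝ) hKK.totallyBounded hδ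
  have hpK' : ∀ x ∈ K, ∀ y ∈ K, dist x y ≤ dist (p x) (p y) + δ := fun x hx y hy => by
    simpa only [dist_eq_norm, map_sub] using hpK (x - y) (sub_mem_sub hx hy)
  refine ⟨k, p, coneEnvelope f p K L ε ρ, δ, hδ, ?_, lipschitzWith_coneEnvelope hf hbdd,
    fun x hx => ?_, fun x hx C hC =>
      lipschitzOnWith_coneEnvelope hf hε hρ.le hbdd hx (hpK' x hx) hδ hδρ.le hC⟩
  · exact LipschitzWith.mk_one fun x y => by simpa only [dist_eq_norm, map_sub] using hp (x - y)
  · have hupper := coneEnvelope_apply_le (p := p) (ε := ε) hf hρ.le hbdd hx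
    have hlower := le_coneEnvelope_apply_add (ε := ε) hf hρ.le hδ.le hx (hpK' x hx)
    have hεδ : 0 ≤ ε * δ := by positivity
    rw [Real.dist_eq, abs_le]
    constructor <;> linarith

lemma exists_bounded_lipschitz_factor_approx {m M : ℝ} (hf : LipschitzWith L f)
    (hmM : ∀ x, f x ∈ Icc m M) (hK : IsCompact K) (hε : 0 < ε) (hρ : 0 < ρ) :
    ∃ (k : ℕ) (p : B →L[ℝ] (Fin k → ℝ)) (g : (Fin k → ℝ) → ℝ) (δ : ℝ), 0 < δ ∧
      LipschitzWith 1 p ∧ (∀ v, g v ∈ Icc m M) ∧ LipschitzWith (L + ε) g ∧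
      (∀ x ∈ K, dist (g (p x)) (f x) ≤ ε * ρ) ∧
      ∀ x ∈ K, ∀ C : ℝ≥0, LipschitzOnWith C f (closedBall x (2 * ρ)) →
        LipschitzOnWith (C + ε) g (ball (p x) δ) := by
  obtain ⟨k, p, g, δ, hδ, hp, hg, hgf, hgloc⟩ := exists_lipschitz_factor_approx hf hK hε hρ
  have hle : m ≤ M := (hmM 0).1.trans (hmM 0).2
  let clamp : ℝ → ℝ := fun t => projIcc m M hle t
  have hclamp : LipschitzWith 1 clamp := by
    simpa only [mul_one] using! (LipschitzWith.subtype_val _).comp (LipschitzWith.projIcc hle)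
  have hclamp_f (x : B) : clamp (f x) = f x := congrArg Subtype.val (projIcc_of_mem hle (hmM x))
  refine ⟨k, p, clamp ∘ g, δ, hδ, hp, fun v => (projIcc m M hle (g v)).2, ?_, fun x hx => ?_,
    fun x hx C hC => ?_⟩
  · simpa only [one_mul] using hclamp.comp hg
  · calc dist (clamp (g (p x))) (f x) = dist (clamp (g (p x))) (clamp (f x)) := by rw [hclamp_f]
      _ ≤ dist (g (p x)) (f x) := by simpa using hclamp.dist_le_mul (g (p x)) (f x)
      _ ≤ ε * ρ := hgf x hx
  · simpa only [one_mul] using hclamp.comp_lipschitzOnWith (hgloc x hx C hC)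

lemma exists_isCylindrical_approx {m M : ℝ} (hf : LipschitzWith L f) (hmM : ∀ x, f x ∈ Icc m M)
    (hK : IsCompact K) (hε : 0 < ε) (hρ : 0 < ρ) :
    ∃ F : B → ℝ, IsCylindrical F ∧ (∀ x, F x ∈ Icc m M) ∧ LipschitzWith (L + ε) F ∧
      (∀ x ∈ K, dist (F x) (f x) ≤ 2 * ε * ρ) ∧
      ∀ x ∈ K, ∀ C : ℝ≥0, LipschitzOnWith C f (closedBall x (2 * ρ)) →
        ‖fderiv ℝ F x‖ ≤ C + ε := by
  obtain ⟨k, p, g, δ, hδ, hp, hgmM, hg, hgf, hgloc⟩ :=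
    exists_bounded_lipschitz_factor_approx hf hmM hK hε hρ
  obtain ⟨τ, hτ, hτδ, hτε⟩ : ∃ τ : ℝ, 0 < τ ∧ τ + τ ≤ δ ∧ (L + ε) * τ ≤ ε * ρ := by
    refine ⟨min (δ / 2) (ε * ρ / (L + ε)), by positivity, ?_, ?_⟩
    · linarith [min_le_left (δ / 2) (ε * ρ / (L + ε))]
    · rw [mul_comm, ← le_div_iff₀ (by positivity)]
      exact min_le_right _ _
  obtain ⟨G, hGsmooth, hGmM, hGg, hGlip⟩ := exists_contDiff_approx hg hgmM hτ
  have hG : LipschitzWith (L + ε) G := lipschitzOnWith_univ.1 (hGlip _ _ hg.lipschitzOnWith)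
  refine ⟨G ∘ p, ⟨Fin k → ℝ, inferInstance, inferInstance, inferInstance, p, G, hGsmooth,
    ⟨max |m| |M|, fun v => abs_le_max_abs_abs (hGmM v).1 (hGmM v).2⟩, ⟨_, hG⟩, rfl⟩,
    fun x => hGmM (p x), by simpa only [mul_one] using hG.comp hp, fun x hx => ?_,
    fun x hx C hC => ?_⟩
  · calc dist (G (p x)) (f x) ≤ dist (G (p x)) (g (p x)) + dist (g (p x)) (f x) :=
          dist_triangle _ _ _
      _ ≤ (L + ε) * τ + ε * ρ := add_le_add (hGg (p x)) (hgf x hx)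
      _ ≤ 2 * ε * ρ := by linarith
  · have hthick : thickening τ (ball (p x) τ) ⊆ ball (p x) δ :=
      (Metric.thickening_ball _ _ _).trans (ball_subset_ball hτδ)
    have hGloc := hGlip _ _ ((hgloc x hx C hC).mono hthick)
    have hmaps : MapsTo p (ball x τ) (ball (p x) τ) := by
      simpa only [one_mul, NNReal.coe_one] using hp.mapsTo_ball one_ne_zero x τ
    have hFloc : LipschitzOnWith (C + ε) (G ∘ p) (ball x τ) := by
      simpa only [mul_one] using hGloc.comp hp.lipschitzOnWith hmaps
    simpa using norm_fderiv_le_of_lipschitzOn ℝ (ball_mem_nhds x hτ) hFloc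

lemma exists_seq_isCylindrical_approx {m M : ℝ} {E : Set B} (hf : LipschitzWith L f)
    (hmM : ∀ x, f x ∈ Icc m M) (hE : IsSigmaCompact E) (hε : 0 < ε) :
    ∃ F : ℕ → B → ℝ, (∀ n, IsCylindrical (F n)) ∧ (∀ n x, F n x ∈ Icc m M) ∧
      (∀ n, LipschitzWith (L + ε) (F n)) ∧
      (∀ x ∈ E, Tendsto (fun n => F n x) atTop (𝓝 (f x))) ∧
      ∀ x ∈ E, limsup (fun n => ENNReal.ofReal ‖fderiv ℝ (F n) x‖) atTop ≤ asympSlope f x := by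
  obtain ⟨K, hK, rfl⟩ := hE
  obtain ⟨e, -, he, he_lim⟩ := exists_seq_strictAnti_tendsto' hε
  have he_lim' : Tendsto (fun n => (e n : ℝ)) atTop (𝓝 0) := NNReal.tendsto_coe.2 he_lim
  choose F hF_cyl hF_mem hF_lip hF_dist hF_fderiv using fun n =>
    exists_isCylindrical_approx hf hmM (isCompact_accumulate hK n) (he n).1 (he n).1
  refine ⟨F, hF_cyl, hF_mem, fun n => (hF_lip n).weaken (by gcongr; exact (he n).2.le),
    fun x hx => ?_, fun x hx => ?_⟩
  · have hbound : Tendsto (fun n => 2 * (e n : ℝ) * e n) atTop (𝓝 0) := by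
      simpa using (he_lim'.const_mul 2).mul he_lim'
    exact tendsto_iff_dist_tendsto_zero.2 <| squeeze_zero' (.of_forall fun _ => dist_nonneg)
      ((eventually_mem_accumulate hx).mono fun n hn => hF_dist n x hn) hbound
  · have hradius : Tendsto (fun n => 2 * (e n : ℝ)) atTop (𝓝 0) := by
      simpa using he_lim'.const_mul 2
    exact limsup_ofReal_le_asympSlope hradius he_lim'
      ((eventually_mem_accumulate hx).mono fun n hn => hF_fderiv n x hn)

end CylindricalApproximation

theorem approx_with_cylindrical_general {B : Type*} [NormedAddCommGroup B] [NormedSpace ℝ B]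
    (E : Set B) (hE : IsSigmaCompact E) (f : B → ℝ) (hLip : ∃ K, LipschitzWith K f)
    (hBdd : ∃ C, ∀ x, |f x| ≤ C) (ε : ℝ) (hε : 0 < ε) :
    ∃ F : ℕ → B → ℝ, (∀ n, IsCylindrical (F n)) ∧
      (∀ n x, sInf (Set.range f) ≤ F n x ∧ F n x ≤ sSup (Set.range f)) ∧
      (∀ n, lipOn (F n) Set.univ ≤ lipOn f Set.univ + ENNReal.ofReal ε) ∧
      (∀ x ∈ E, Tendsto (fun n => F n x) atTop (nhds (f x))) ∧
      (∀ x ∈ E,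
        Filter.limsup (fun n => ENNReal.ofReal ‖fderiv ℝ (F n) x‖) atTop ≤ asympSlope f x) := by
  obtain ⟨_, hLip⟩ := hLip
  obtain ⟨C, hC⟩ := hBdd
  have htop : lipOn f univ ≠ ⊤ := lipOn_ne_top hLip.lipschitzOnWith
  have hf : LipschitzWith (lipOn f univ).toNNReal f :=
    lipschitzOnWith_univ.1 (lipschitzOnWith_toNNReal_lipOn htop)
  have hmM (x : B) : f x ∈ Icc (sInf (range f)) (sSup (range f)) :=
    (isBounded_iff_forall_norm_le.2 ⟨C, forall_mem_range.2 hC⟩).subset_Icc_sInf_sSup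
      (mem_range_self x)
  obtain ⟨F, hF_cyl, hF_mem, hF_lip, hF_lim, hF_fderiv⟩ :=
    exists_seq_isCylindrical_approx hf hmM hE (Real.toNNReal_pos.2 hε)
  refine ⟨F, hF_cyl, hF_mem, fun n => ?_, hF_lim, hF_fderiv⟩
  calc lipOn (F n) univ ≤ ((lipOn f univ).toNNReal + ε.toNNReal : ℝ≥0) :=
        lipOn_le_coe_iff.2 (hF_lip n).lipschitzOnWith
    _ = lipOn f univ + ENNReal.ofReal ε := by
        rw [ENNReal.coe_add, ENNReal.coe_toNNReal htop, ENNReal.ofReal]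

/-- **Main approximation theorem.** Given a bounded Lipschitz function `f` on a real Banach
space `B`, a σ-compact set `E ⊆ B` and `ε > 0`, there is a sequence of smooth cylindrical
functions `Fₙ` with `inf f ≤ Fₙ ≤ sup f` and `Lip(Fₙ) ≤ Lip(f) + ε`, converging to `f`
pointwise on `E` and with `limsupₙ ‖d_x Fₙ‖ ≤ lip_a(f)(x)` for every `x ∈ E`. -/
theorem approx_with_cylindrical {B : Type*} [NormedAddCommGroup B] [NormedSpace ℝ B]
    [CompleteSpace B] (E : Set B) (hE : IsSigmaCompact E)
    (f : B → ℝ) (hLip : ∃ K, LipschitzWith K f) (hBdd : ∃ C, ∀ x, |f x| ≤ C)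
    (ε : ℝ) (hε : 0 < ε) :
    ∃ F : ℕ → B → ℝ, (∀ n, IsCylindrical (F n)) ∧
      (∀ n x, sInf (Set.range f) ≤ F n x ∧ F n x ≤ sSup (Set.range f)) ∧
      (∀ n, lipOn (F n) Set.univ ≤ lipOn f Set.univ + ENNReal.ofReal ε) ∧
      (∀ x ∈ E, Tendsto (fun n => F n x) atTop (nhds (f x))) ∧
      (∀ x ∈ E,
        Filter.limsup (fun n => ENNReal.ofReal ‖fderiv ℝ (F n) x‖) atTop ≤ asympSlope f x) := by
  exact approx_with_cylindrical_general E hE f hLip hBdd ε hε
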